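/- For every a with 0 ≤ a ≤ n, every b with 1 ≤ b ≤ n, and every function f : {0,…,n} → {1,…,n}, one has ⟨v_{a,b} ⊗ conj(v_{a,b}), ψ_f⟩ ≠ 0 if and only if f(a) = b; in fact this inner product equals (1/√n) if f(a) = b and equals 0 otherwise. -/

import Mathlib

open scoped ComplexInnerProductSpace ComplexConjugate BigOperators

/-- The tensor product `x ⊗ conj x'` of a vector with the componentwise conjugate of
another vector, viewed as a vector of `ℂ^n ⊗ ℂ^n ≅ ℂ^{n²}`. -/
noncomputable def tensConj {n : ℕ} (x x' : EuclideanSpace ℂ (Fin n)) :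
    EuclideanSpace ℂ (Fin n × Fin n) :=
  WithLp.toLp 2 fun p => x p.1 * conj (x' p.2)
/-- The state `φ = (1/√n) Σ_b v_b ⊗ conj v_b` built from a basis `v`. -/
noncomputable def meState {n : ℕ} (v : Fin n → EuclideanSpace ℂ (Fin n)) :
    EuclideanSpace ℂ (Fin n × Fin n) :=
  ((Real.sqrt n : ℂ))⁻¹ • ∑ b : Fin n, tensConj (v b) (v b)

/-- The state `ψ_f = -φ + γ_f` where `φ = (1/√n) Σ_b v_{0,b} ⊗ conj v_{0,b}` and
`γ_f = (1/√n) Σ_a v_{a,f(a)} ⊗ conj v_{a,f(a)}`. -/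
noncomputable def psiState {n : ℕ} (v : Fin (n + 1) → Fin n → EuclideanSpace ℂ (Fin n))
    (f : Fin (n + 1) → Fin n) : EuclideanSpace ℂ (Fin n × Fin n) :=
  -meState (v 0) +
    ((Real.sqrt n : ℂ))⁻¹ • ∑ a : Fin (n + 1), tensConj (v a (f a)) (v a (f a))

theorem inner_tensConj_self_aux {n : ℕ} (x y : EuclideanSpace ℂ (Fin n)) :
    ⟪tensConj x x, tensConj y y⟫ = ((‖⟪x, y⟫‖ ^ 2 : ℝ) : ℂ) := by
  have h : ((‖⟪x, y⟫‖ ^ 2 : ℝ) : ℂ) = ⟪x, y⟫ * conj ⟪x, y⟫ := by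
    rw [Complex.mul_conj, Complex.normSq_eq_norm_sq]
  rw [h]
  simp only [tensConj, PiLp.inner_apply, RCLike.inner_apply, map_sum, map_mul,
    Finset.sum_mul_sum, Fintype.sum_prod_type, Complex.conj_conj]
  refine Finset.sum_congr rfl fun i _ => Finset.sum_congr rfl fun j _ => ?_
  ring

/-- `⟨v_{a,b} ⊗ conj v_{a,b}, ψ_f⟩ ≠ 0` if and only if `f(a) = b`; in fact this
inner product equals `1/√n` when `f(a) = b` and `0` otherwise. -/
theorem inner_tensConj_psiState
    (n : ℕ) (hn : 1 ≤ n)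
    (v : Fin (n + 1) → Fin n → EuclideanSpace ℂ (Fin n))
    (horth : ∀ a, Orthonormal ℂ (v a))
    (hmub : ∀ a a', a ≠ a' → ∀ b b', ‖⟪v a b, v a' b'⟫‖ ^ 2 = 1 / n)
    (a : Fin (n + 1)) (b : Fin n) (f : Fin (n + 1) → Fin n) :
    (⟪tensConj (v a b) (v a b), psiState v f⟫ ≠ 0 ↔ f a = b) ∧
    ⟪tensConj (v a b) (v a b), psiState v f⟫ =
      if f a = b then ((Real.sqrt n : ℂ))⁻¹ else 0 := by
  have hn0 : (n : ℂ) ≠ 0 := by exact_mod_cast (by omega : n ≠ 0)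
  have hs : ((Real.sqrt n : ℂ))⁻¹ ≠ 0 := by
    apply inv_ne_zero
    have : Real.sqrt n ≠ 0 := by positivity
    exact_mod_cast this
  have hsame : ∀ a b b', ((‖⟪v a b, v a b'⟫‖ ^ 2 : ℝ) : ℂ) = if b = b' then 1 else 0 := by
    intro a b b'
    rw [orthonormal_iff_ite.mp (horth a) b b']
    split_ifs <;> simp
  have hdiff : ∀ a a', a ≠ a' → ∀ b b', ((‖⟪v a b, v a' b'⟫‖ ^ 2 : ℝ) : ℂ) = 1 / n := by
    intro a a' h b b'
    rw [hmub a a' h b b']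
    push_cast
    rfl
  have h1 : ∑ b' : Fin n, ((‖⟪v a b, v 0 b'⟫‖ ^ 2 : ℝ) : ℂ) = 1 := by
    by_cases ha : a = 0
    · subst ha
      simp only [hsame]
      simp
    · simp only [hdiff a 0 ha]
      simp [hn0]
  have h2 : ∑ a' : Fin (n + 1), ((‖⟪v a b, v a' (f a')⟫‖ ^ 2 : ℝ) : ℂ)
      = 1 + if f a = b then 1 else 0 := by
    rw [← Finset.add_sum_erase _ _ (Finset.mem_univ a), hsame,
      Finset.sum_congr rfl (fun a' ha' => hdiff a a' (Finset.ne_of_mem_erase ha').symm b (f a'))]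
    simp [hn0, eq_comm, add_comm]
  have key : ⟪tensConj (v a b) (v a b), psiState v f⟫ =
      if f a = b then ((Real.sqrt n : ℂ))⁻¹ else 0 := by
    simp only [psiState, meState, inner_add_right, inner_neg_right, inner_smul_right, inner_sum,
      inner_tensConj_self_aux]
    rw [h1, h2]
    split_ifs <;> ring
  refine ⟨?_, key⟩
  rw [key]
  split_ifs with h <;> simp only [h, hs, ne_eq, not_true_eq_false, not_false_eq_true]
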